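/- arXiv:2409.16206 — 2 statements merged into one kernel-verified Lean document; each statement's English description precedes it below -/
import Mathlib

section
/- Let R be a unique factorization domain (a commutative integral domain with unique factorization) and let d ≥ 3 be an integer such that the image of d−1 in R is nonzero (i.e. the characteristic of R does not divide d−1). Then no polynomial in R[x] of degree d is (d−1)-superirreducible over R. Equivalently: for every irreducible polynomial f ∈ R[x] of degree d, there exists a nonconstant polynomial g ∈ R[x] of degree at most d−1 such that f(g(x)) is not irreducible in R[x]. -/
open Polynomial

/-- A polynomial `f ∈ R[x]` is `k`-superirreducible over `R` if it is irreducible and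
`f(g(x))` is irreducible for every nonconstant `g ∈ R[x]` of degree at most `k`. -/
def IsSuperirreducible (R : Type*) [CommRing R] [IsDomain R] (k : ℕ) (f : Polynomial R) : Prop :=
  Irreducible f ∧ ∀ g : Polynomial R, 0 < g.natDegree → g.natDegree ≤ k →
    Irreducible (f.comp g)

/-!
Let `H` be a polynomial and suppose that `w` is an inverse of `u` modulo `q = H.reverse(u)`. Since
`H.reverse(u) = 0` modulo `q`, also `H(w) = 0` modulo `q`, that is, `q ∣ H(w)`. When `H` is monic
with next coefficient `n`, its reverse is `1 + n x + x² v(x)`, so that for `u = t x` one may take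
`w = t g - n` with `g = -x v(t x)`. The polynomial `f` of degree `d`, with leading coefficient `a`
and next coefficient `b`, is brought into this position by `t = (d - 1) a` and
`H(y) = (d - 1)^d a^(d - 1) f((y - b) / t)`: this is monic with next coefficient exactly `-b`, so
`H(t g - n)` is a constant multiple of `f(g)`, by a constant that is coprime to `q`. Hence
`q ∣ f(g)`, where `deg q = deg g + 1 < d * deg g` as soon as `v ≠ 0`. If `v = 0`, then
`H(y) = y^(d - 1) (y + n)`, which forces `f(0) = 0`, and `f` is divisible by `x`.
-/

section Coefficients

variable {R : Type*} [Semiring R]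

theorem nextCoeff_scaleRoots (p : R[X]) (s : R) :
    (p.scaleRoots s).nextCoeff = p.nextCoeff * s := by
  rcases Nat.eq_zero_or_pos p.natDegree with hp | hp
  · simp only [nextCoeff, natDegree_scaleRoots, hp, if_true, zero_mul]
  · have hsub : p.natDegree - (p.natDegree - 1) = 1 := by lia
    rw [nextCoeff_of_natDegree_pos hp, nextCoeff_of_natDegree_pos (by rwa [natDegree_scaleRoots]),
      natDegree_scaleRoots, coeff_scaleRoots, hsub, pow_one]

theorem nextCoeff_integralNormalization (p : R[X]) :
    p.integralNormalization.nextCoeff = p.nextCoeff := by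
  rcases Nat.eq_zero_or_pos p.natDegree with hp | hp
  · simp only [nextCoeff, natDegree_integralNormalization, hp, if_true]
  · rw [nextCoeff_of_natDegree_pos hp,
      nextCoeff_of_natDegree_pos (by rwa [natDegree_integralNormalization]),
      natDegree_integralNormalization, integralNormalization_coeff_ne_natDegree (by lia),
      Nat.sub_self, pow_zero, mul_one]

theorem nextCoeff_taylor (p : R[X]) (r : R) :
    (taylor r p).nextCoeff = p.nextCoeff + p.natDegree * p.leadingCoeff * r := by
  rcases Nat.eq_zero_or_pos p.natDegree with hp | hp
  · simp only [nextCoeff, natDegree_taylor, hp, if_true, Nat.cast_zero, zero_mul, add_zero]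
  · have hderiv : (hasseDeriv (p.natDegree - 1) p).natDegree < 2 :=
      (natDegree_hasseDeriv_le p _).trans_lt (by lia)
    have hchoose : p.natDegree.choose (p.natDegree - 1) = p.natDegree := by
      rw [Nat.choose_symm hp, Nat.choose_one_right]
    rw [nextCoeff_of_natDegree_pos hp, nextCoeff_of_natDegree_pos (by rwa [natDegree_taylor]),
      natDegree_taylor, taylor_coeff, eval_eq_sum_range' hderiv]
    simp [Finset.sum_range_succ, hasseDeriv_coeff, Nat.add_sub_cancel' hp, hchoose]

theorem two_le_natDegree_of_divX_divX_ne_zero {p : R[X]} (hp : p.divX.divX ≠ 0) :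
    2 ≤ p.natDegree := by
  contrapose! hp
  ext n
  rw [coeff_divX, coeff_divX, coeff_zero, coeff_eq_zero_of_natDegree_lt (by lia)]

end Coefficients

theorem aeval_reverse_dvd_aeval {R A : Type*} [CommSemiring R] [CommRing A] [Algebra R A]
    (p : R[X]) {u w : A} (h : aeval u p.reverse ∣ 1 - u * w) :
    aeval u p.reverse ∣ aeval w p := by
  let π := Ideal.Quotient.mkₐ R (Ideal.span {aeval u p.reverse})
  have hπ (x : A) : π x = 0 ↔ aeval u p.reverse ∣ x :=
    Ideal.Quotient.eq_zero_iff_mem.trans Ideal.mem_span_singleton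
  have huw : π u * π w = 1 := by
    rw [← map_mul, eq_comm, ← sub_eq_zero, ← map_one π, ← map_sub, hπ]
    exact h
  let : Invertible (π w) := invertibleOfLeftInverse _ _ huw
  have hu : eval₂ (algebraMap R _) (⅟(π w)) p.reverse = 0 := by
    change aeval (π u) p.reverse = 0
    rw [aeval_algHom_apply, hπ]
  rw [← hπ, ← aeval_algHom_apply]
  exact (eval₂_reverse_eq_zero_iff _ _ p).mp hu

theorem not_irreducible_of_dvd_of_natDegree_lt {R : Type*} [CommSemiring R] [NoZeroDivisors R]
    {p q : R[X]} (hpq : p ∣ q) (hp : 0 < p.natDegree) (hlt : p.natDegree < q.natDegree) :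
    ¬ Irreducible q := by
  obtain ⟨s, rfl⟩ := hpq
  intro hirr
  rcases hirr.isUnit_or_isUnit rfl with hunit | hunit
  · exact hp.ne' (natDegree_eq_zero_of_isUnit hunit)
  · have hs := natDegree_eq_zero_of_isUnit hunit
    have := natDegree_mul_le (p := p) (q := s)
    lia

section ReciprocalSubst

variable {R : Type*} [CommRing R]

/-- The polynomial `-x v(t x)`, where `p.reverse = c + n x + x² v(x)`. For monic `p`, it is chosen
so that `t * reciprocalSubst p t - n` is an inverse of `t x` modulo `p.reverse(t x)`. -/
noncomputable def reciprocalSubst (p : R[X]) (t : R) : R[X] :=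
  -(X * p.reverse.divX.divX.comp (C t * X))

theorem reverse_eq_add_X_mul_divX_divX (p : R[X]) :
    p.reverse =
      C p.leadingCoeff + X * (C p.nextCoeff + X * p.reverse.divX.divX) := by
  have hdivX : p.reverse.divX = C p.nextCoeff + X * p.reverse.divX.divX := by
    conv_lhs => rw [← X_mul_divX_add p.reverse.divX]
    rw [coeff_divX, coeff_one_reverse, add_comm]
  conv_lhs => rw [← X_mul_divX_add p.reverse]
  rw [← hdivX, coeff_zero_reverse, add_comm]

theorem reverse_comp_C_mul_X_of_monic {p : R[X]} (hp : p.Monic) (t : R) :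
    p.reverse.comp (C t * X) =
      1 - C t * X * (C t * reciprocalSubst p t - C p.nextCoeff) := by
  conv_lhs => rw [reverse_eq_add_X_mul_divX_divX, hp.leadingCoeff]
  simp only [add_comp, mul_comp, C_comp, X_comp, C_1, one_comp, reciprocalSubst]
  ring

theorem isCoprime_reverse_comp_C_mul_X {p : R[X]} (hp : p.Monic) (t : R) :
    IsCoprime (p.reverse.comp (C t * X)) (C t) := by
  refine ⟨1, X * (C t * reciprocalSubst p t - C p.nextCoeff), ?_⟩
  rw [reverse_comp_C_mul_X_of_monic hp]
  ring

theorem reverse_comp_dvd_comp_reciprocalSubst {p : R[X]} (hp : p.Monic) (t : R) :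
    p.reverse.comp (C t * X) ∣ p.comp (C t * reciprocalSubst p t - C p.nextCoeff) := by
  refine aeval_reverse_dvd_aeval p (dvd_of_eq ?_)
  rw [← comp_eq_aeval, reverse_comp_C_mul_X_of_monic hp]

theorem eval_neg_nextCoeff_eq_zero_of_divX_divX_reverse_eq_zero {p : R[X]} (hp : p.Monic)
    (hdeg : 0 < p.natDegree) (hv : p.reverse.divX.divX = 0) :
    p.eval (-p.nextCoeff) = 0 := by
  have hreverse : p.reverse = 1 + C p.nextCoeff * X ^ 1 := by
    rw [reverse_eq_add_X_mul_divX_divX, hv, hp.leadingCoeff, C_1]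
    ring
  have hp_eq : p = X ^ p.natDegree + C p.nextCoeff * X ^ (p.natDegree - 1) := by
    conv_lhs => rw [← reflect_reflect (N := p.natDegree) (p := p), ← reverse, hreverse]
    rw [reflect_add, reflect_one, reflect_C_mul_X_pow, revAt_le hdeg]
  calc p.eval (-p.nextCoeff)
      = (-p.nextCoeff) ^ p.natDegree + p.nextCoeff * (-p.nextCoeff) ^ (p.natDegree - 1) := by
        simpa only [eval_add, eval_mul, eval_pow, eval_X, eval_C] using
          congrArg (eval (-p.nextCoeff)) hp_eq
    _ = 0 := by
        rw [← pow_sub_one_mul hdeg.ne']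
        ring

theorem natDegree_reverse_comp_C_mul_X [NoZeroDivisors R] (p : R[X]) {t : R} (ht : t ≠ 0) :
    (p.reverse.comp (C t * X)).natDegree = p.reverse.natDegree := by
  rw [natDegree_comp, natDegree_C_mul_X t ht, mul_one]

theorem natDegree_reciprocalSubst_add_one [NoZeroDivisors R] {p : R[X]} {t : R} (ht : t ≠ 0)
    (hv : p.reverse.divX.divX ≠ 0) :
    (reciprocalSubst p t).natDegree + 1 = p.reverse.natDegree := by
  have : Nontrivial R := nontrivial_of_ne t 0 ht
  have hcomp : p.reverse.divX.divX.comp (C t * X) ≠ 0 := by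
    rwa [Ne, comp_C_mul_X_eq_zero_iff (mem_nonZeroDivisors_of_ne_zero ht)]
  have htwo := two_le_natDegree_of_divX_divX_ne_zero hv
  rw [reciprocalSubst, natDegree_neg, natDegree_X_mul hcomp, natDegree_comp,
    natDegree_C_mul_X t ht, mul_one, natDegree_divX_eq_natDegree_tsub_one,
    natDegree_divX_eq_natDegree_tsub_one]
  lia

end ReciprocalSubst

section MonicRecentering

variable {R : Type*} [CommRing R]

/-- The factor `(d - 1) * a` by which `monicRecentering` scales the roots of a polynomial of degree
`d ≥ 1` with leading coefficient `a`. -/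
def recenteringScale (f : R[X]) : R :=
  ((f.natDegree - 1 : ℕ) : R) * f.leadingCoeff

/-- For `f` of degree `d ≥ 1` with leading coefficient `a` and next coefficient `b`, the polynomial
`(d - 1) ^ d * a ^ (d - 1) * f ((y - b) / ((d - 1) * a))`. The shift by `b` makes the next
coefficient equal to `-b`. -/
noncomputable def monicRecentering (f : R[X]) : R[X] :=
  taylor (-f.nextCoeff) (f.integralNormalization.scaleRoots ((f.natDegree - 1 : ℕ) : R))

theorem monic_monicRecentering {f : R[X]} (hf : f ≠ 0) : (monicRecentering f).Monic := by
  rw [monicRecentering, Monic, leadingCoeff_taylor, leadingCoeff_scaleRoots]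
  exact monic_integralNormalization hf

theorem natDegree_monicRecentering (f : R[X]) :
    (monicRecentering f).natDegree = f.natDegree := by
  rw [monicRecentering, natDegree_taylor, natDegree_scaleRoots, natDegree_integralNormalization]

theorem nextCoeff_monicRecentering {f : R[X]} (hf : 0 < f.natDegree) :
    (monicRecentering f).nextCoeff = -f.nextCoeff := by
  have hmonic := monic_integralNormalization (ne_zero_of_natDegree_gt hf)
  rw [monicRecentering, nextCoeff_taylor, nextCoeff_scaleRoots, nextCoeff_integralNormalization,
    natDegree_scaleRoots, natDegree_integralNormalization, leadingCoeff_scaleRoots,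
    hmonic.leadingCoeff, Nat.cast_pred hf]
  ring

theorem monicRecentering_comp {f : R[X]} (hf : 0 < f.natDegree) (g : R[X]) :
    (monicRecentering f).comp (C (recenteringScale f) * g + C f.nextCoeff) =
      C (((f.natDegree - 1 : ℕ) : R) ^ f.natDegree * f.leadingCoeff ^ (f.natDegree - 1)) *
        f.comp g := by
  rw [monicRecentering, recenteringScale, taylor_apply, comp_assoc]
  simp only [add_comp, X_comp, C_comp, C_mul, mul_assoc, C_pow]
  rw [C_neg, add_neg_cancel_right, comp, scaleRoots_eval₂_mul,
    integralNormalization_eval₂_leadingCoeff_mul hf, natDegree_integralNormalization, comp]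

theorem reverse_monicRecentering_comp_dvd_comp {f : R[X]} (hf : 0 < f.natDegree) :
    (monicRecentering f).reverse.comp (C (recenteringScale f) * X) ∣
      f.comp (reciprocalSubst (monicRecentering f) (recenteringScale f)) := by
  have hmonic := monic_monicRecentering (ne_zero_of_natDegree_gt hf)
  have hdvd := reverse_comp_dvd_comp_reciprocalSubst hmonic (recenteringScale f)
  rw [nextCoeff_monicRecentering hf, C_neg, sub_neg_eq_add, monicRecentering_comp hf] at hdvd
  refine IsCoprime.dvd_of_dvd_mul_left ?_ hdvd
  have hcoprime := isCoprime_reverse_comp_C_mul_X hmonic (recenteringScale f)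
  have hdeg := hcoprime.of_isCoprime_of_dvd_right (map_dvd C (dvd_mul_right _ f.leadingCoeff))
  have hlead := hcoprime.of_isCoprime_of_dvd_right (map_dvd C (dvd_mul_left f.leadingCoeff _))
  rw [C_mul, C_pow, C_pow]
  exact hdeg.pow_right.mul_right hlead.pow_right

theorem divX_divX_reverse_monicRecentering_ne_zero [NoZeroDivisors R] {f : R[X]}
    (hf : 0 < f.natDegree) (he : ((f.natDegree - 1 : ℕ) : R) ≠ 0) (hf0 : f.coeff 0 ≠ 0) :
    (monicRecentering f).reverse.divX.divX ≠ 0 := by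
  intro hv
  have heval := eval_neg_nextCoeff_eq_zero_of_divX_divX_reverse_eq_zero
    (monic_monicRecentering (ne_zero_of_natDegree_gt hf))
    (by rwa [natDegree_monicRecentering]) hv
  have hcomp := congrArg (eval 0) (monicRecentering_comp hf 0)
  rw [nextCoeff_monicRecentering hf, neg_neg] at heval
  simp only [mul_zero, zero_add, comp_C, comp_zero, eval_C, eval_mul, heval] at hcomp
  rw [← coeff_zero_eq_eval_zero] at hcomp
  have ha : f.leadingCoeff ≠ 0 := leadingCoeff_ne_zero.mpr (ne_zero_of_natDegree_gt hf)
  exact mul_ne_zero (mul_ne_zero (pow_ne_zero _ he) (pow_ne_zero _ ha)) hf0 hcomp.symm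

theorem exists_comp_not_irreducible [NoZeroDivisors R] {f : R[X]} (hf : 3 ≤ f.natDegree)
    (he : ((f.natDegree - 1 : ℕ) : R) ≠ 0) (hf0 : f.coeff 0 ≠ 0) :
    ∃ g : R[X], 0 < g.natDegree ∧ g.natDegree ≤ f.natDegree - 1 ∧ ¬ Irreducible (f.comp g) := by
  have hpos : 0 < f.natDegree := by lia
  set H := monicRecentering f
  set t := recenteringScale f
  have ht : t ≠ 0 := mul_ne_zero he (leadingCoeff_ne_zero.mpr (ne_zero_of_natDegree_gt hpos))
  have hv : H.reverse.divX.divX ≠ 0 := divX_divX_reverse_monicRecentering_ne_zero hpos he hf0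
  have hg : (reciprocalSubst H t).natDegree + 1 = H.reverse.natDegree :=
    natDegree_reciprocalSubst_add_one ht hv
  have hreverse_ge : 2 ≤ H.reverse.natDegree := two_le_natDegree_of_divX_divX_ne_zero hv
  have hreverse_le : H.reverse.natDegree ≤ f.natDegree :=
    (reverse_natDegree_le H).trans_eq (natDegree_monicRecentering f)
  refine ⟨reciprocalSubst H t, by lia, by lia,
    not_irreducible_of_dvd_of_natDegree_lt
      (reverse_monicRecentering_comp_dvd_comp hpos) ?_ ?_⟩
  · rw [natDegree_reverse_comp_C_mul_X H ht]
    lia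
  · rw [natDegree_reverse_comp_C_mul_X H ht, natDegree_comp]
    nlinarith

end MonicRecentering

theorem no_superirreducible_of_degree_over_ufd_general (R : Type*) [CommRing R] [IsDomain R]
    (d : ℕ) (hd : 3 ≤ d) (hchar : ((d - 1 : ℕ) : R) ≠ 0)
    (f : Polynomial R) (hf : f.natDegree = d) :
    ¬ IsSuperirreducible R (d - 1) f := by
  rintro ⟨hirr, hcomp⟩
  subst hf
  have hf0 : f.coeff 0 ≠ 0 := by
    rw [coeff_zero_eq_eval_zero]
    exact hirr.not_isRoot_of_natDegree_ne_one (by lia)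
  obtain ⟨g, hg_pos, hg_le, hg⟩ := exists_comp_not_irreducible hd hchar hf0
  exact hg (hcomp g hg_pos hg_le)

theorem no_superirreducible_of_degree_over_ufd (R : Type*) [CommRing R] [IsDomain R]
    [UniqueFactorizationMonoid R] (d : ℕ) (hd : 3 ≤ d) (hchar : ((d - 1 : ℕ) : R) ≠ 0)
    (f : Polynomial R) (hf : f.natDegree = d) :
    ¬ IsSuperirreducible R (d - 1) f :=
  no_superirreducible_of_degree_over_ufd_general R d hd hchar f hf
end

section
/- The polynomial x⁴ + 2 ∈ ℚ[x] is 2-superirreducible over ℚ: it is irreducible in ℚ[x], and for every nonconstant polynomial g ∈ ℚ[x] of degree at most 2, the composition (x⁴+2)∘g is irreducible in ℚ[x]. -/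
open Polynomial

/-!
Affine substitutions preserve irreducibility, so completing the square in a quadratic `g` reduces
the irreducibility of `f ∘ g` to that of `F(X²)` with `F = f(aX + c)` irreducible. For a root `α`
of `F`, the polynomial `F(X²)` is irreducible as soon as `α` is not a square in `K(α)`, hence as
soon as the norm of `α` is not a square in `K`. For `f` of even degree, that norm is
`lc(f) * f(c)` up to squares. For `f = X⁴ + 2` it remains to see that `c⁴ + 2` is never a rational
square, which is an infinite descent: a coprime solution of `x⁴ + 2y⁴ = z²` gives one of
`x² + 8a⁴ = b⁴` with `y = 2ab`, which in turn gives `d⁴ + 2c⁴ = b²` with `a = cd`.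
-/

section Superirreducible

variable {K : Type*} [Field K]

theorem irreducible_comp_C_mul_X_add_C_iff {a : K} (ha : a ≠ 0) (b : K) {f : K[X]} :
    Irreducible (f.comp (C a * X + C b)) ↔ Irreducible f := by
  let _ : Invertible a := invertibleOfNonzero ha
  exact MulEquiv.irreducible_iff (algEquivCMulXAddC a b)

open IntermediateField in
theorem irreducible_expand_two_of_monic {f : K[X]} (hf : Irreducible f) (hm : f.Monic)
    (h : ¬IsSquare ((-1) ^ f.natDegree * f.coeff 0)) : Irreducible (expand K 2 f) := by
  rw [expand_eq_comp_X_pow]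
  refine irreducible_comp hm (monic_X_pow 2) hf fun E _ _ α hα ↦ ?_
  have hint : IsIntegral K α := by
    rw [← minpoly.ne_zero_iff, hα]
    exact hm.ne_zero
  have hnorm : Algebra.norm K (AdjoinSimple.gen K α) = (-1) ^ f.natDegree * f.coeff 0 := by
    rw [← adjoin.powerBasis_gen hint, Algebra.PowerBasis.norm_gen_eq_coeff_zero_minpoly,
      adjoin.powerBasis_gen, minpoly_gen, adjoin.powerBasis_dim, hα]
  rw [Polynomial.map_pow, map_X]
  refine X_pow_sub_C_irreducible_of_prime Nat.prime_two fun s hs ↦ h ?_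
  rw [← hnorm, ← hs, map_pow]
  exact IsSquare.sq _

theorem irreducible_expand_two {f : K[X]} (hf : Irreducible f)
    (h : ¬IsSquare ((-1) ^ f.natDegree * (f.leadingCoeff * f.coeff 0))) :
    Irreducible (expand K 2 f) := by
  have hlc : f.leadingCoeff ≠ 0 := leadingCoeff_ne_zero.2 hf.ne_zero
  have hunit : IsUnit (C f.leadingCoeff⁻¹ : K[X]) := isUnit_C.2 (inv_ne_zero hlc).isUnit
  have hmonic : Irreducible (expand K 2 (f * C f.leadingCoeff⁻¹)) := by
    refine irreducible_expand_two_of_monic (irreducible_mul_leadingCoeff_inv.2 hf)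
      (monic_mul_leadingCoeff_inv hf.ne_zero) fun hsq ↦ h ?_
    have hmul : (-1) ^ f.natDegree * (f.leadingCoeff * f.coeff 0) =
        (-1) ^ f.natDegree * (f.coeff 0 * f.leadingCoeff⁻¹) * f.leadingCoeff ^ 2 := by
      field
    rw [natDegree_mul_leadingCoeff_inv _ hf.ne_zero, coeff_mul_C] at hsq
    exact hmul ▸ hsq.mul (IsSquare.sq f.leadingCoeff)
  rwa [map_mul, expand_C, irreducible_mul_isUnit hunit] at hmonic

theorem exists_eq_C_mul_X_add_C_sq_add_C [NeZero (2 : K)] {g : K[X]} (hg : g.natDegree = 2) :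
    ∃ a b c : K, a ≠ 0 ∧ g = C a * (X + C b) ^ 2 + C c := by
  have ha : g.coeff 2 ≠ 0 := by
    rw [← hg, coeff_natDegree, leadingCoeff_ne_zero]
    exact ne_zero_of_natDegree_gt (hg ▸ two_pos)
  obtain ⟨b, hb⟩ : ∃ b, g.coeff 1 = 2 * (g.coeff 2 * b) :=
    ⟨g.coeff 1 / (2 * g.coeff 2), by field⟩
  refine ⟨g.coeff 2, b, g.coeff 0 - g.coeff 2 * b ^ 2, ha, ?_⟩
  conv_lhs => rw [eq_quadratic_of_degree_le_two (natDegree_le_iff_degree_le.1 hg.le), hb]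
  simp only [map_mul, map_sub, map_pow, map_ofNat]
  ring

theorem irreducible_comp_C_mul_X_add_C_sq_add_C {f : K[X]} (hf : Irreducible f)
    (hd : Even f.natDegree) {a : K} (ha : a ≠ 0) (b : K) {c : K}
    (h : ¬IsSquare (f.leadingCoeff * f.eval c)) :
    Irreducible (f.comp (C a * (X + C b) ^ 2 + C c)) := by
  have hcomp : f.comp (C a * (X + C b) ^ 2 + C c) =
      (expand K 2 (f.comp (C a * X + C c))).comp (C 1 * X + C b) := by
    simp [expand_eq_comp_X_pow, comp_assoc]
  have hlin : (C a * X + C c).natDegree = 1 := natDegree_linear ha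
  have hdeg : Even (f.comp (C a * X + C c)).natDegree := by
    rwa [natDegree_comp, hlin, mul_one]
  have hlc : (f.comp (C a * X + C c)).leadingCoeff = f.leadingCoeff * a ^ f.natDegree := by
    rw [leadingCoeff_comp (hlin ▸ one_ne_zero), leadingCoeff_linear ha]
  have hzero : (f.comp (C a * X + C c)).coeff 0 = f.eval c := by
    simp [coeff_zero_eq_eval_zero]
  rw [hcomp, irreducible_comp_C_mul_X_add_C_iff one_ne_zero]
  refine irreducible_expand_two ((irreducible_comp_C_mul_X_add_C_iff ha c).2 hf) fun hsq ↦ h ?_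
  rw [hdeg.neg_one_pow, one_mul, hlc, hzero, mul_right_comm] at hsq
  simpa [ha] using hsq.div (hd.isSquare_pow a)

theorem isSuperirreducible_two_of_forall_not_isSquare [NeZero (2 : K)] {f : K[X]}
    (hf : Irreducible f) (hd : Even f.natDegree)
    (h : ∀ c, ¬IsSquare (f.leadingCoeff * f.eval c)) : IsSuperirreducible K 2 f := by
  refine ⟨hf, fun g hpos hle ↦ ?_⟩
  obtain hg | hg : g.natDegree = 1 ∨ g.natDegree = 2 := by lia
  · obtain ⟨a, ha, b, rfl⟩ := natDegree_eq_one.1 hg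
    exact (irreducible_comp_C_mul_X_add_C_iff ha b).2 hf
  · obtain ⟨a, b, c, ha, rfl⟩ := exists_eq_C_mul_X_add_C_sq_add_C hg
    exact irreducible_comp_C_mul_X_add_C_sq_add_C hf hd ha b (h c)

theorem irreducible_X_pow_four_add_C {t : K} (ht : ¬IsSquare t) (hnt : ¬IsSquare (-t)) :
    Irreducible (X ^ 4 + C t : K[X]) := by
  have hquad : expand K 2 (X + C t) = X ^ 2 + C t := by simp
  have hquart : expand K 2 (X ^ 2 + C t) = X ^ 4 + C t := by simp [← pow_mul]
  have hirr : Irreducible (X ^ 2 + C t : K[X]) := by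
    rw [← hquad]
    exact irreducible_expand_two_of_monic (irreducible_of_degree_eq_one (degree_X_add_C t))
      (monic_X_add_C t) (by simpa using hnt)
  rw [← hquart]
  exact irreducible_expand_two_of_monic hirr (monic_X_pow_add_C t two_ne_zero)
    (by simpa using ht)

end Superirreducible

section Descent

theorem exists_coprime_add_eq_and_mul_eq_of_sq_add_eq_sq {p n q : ℕ} (h : p ^ 2 + n = q ^ 2)
    (hn : Even n) (hpn : p.Coprime n) :
    ∃ u v : ℕ, u.Coprime v ∧ v = u + p ∧ u + v = q ∧ 4 * (u * v) = n := by
  have hp : Odd p := Nat.coprime_two_right.1 (hpn.coprime_dvd_right hn.two_dvd)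
  have hq : Odd q := by
    rw [← Nat.odd_pow_iff two_ne_zero, ← h]
    exact hp.pow.add_even hn
  have hpq : p ≤ q := (Nat.pow_le_pow_iff_left two_ne_zero).1 (h ▸ Nat.le_add_right _ _)
  obtain ⟨u, hu⟩ := Nat.Odd.sub_odd hq hp
  obtain rfl : q = p + 2 * u := by lia
  have huv : 4 * (u * (u + p)) = n := by linarith
  refine ⟨u, u + p, ?_, rfl, by ring, huv⟩
  rw [Nat.coprime_self_add_right]
  exact (hpn.coprime_dvd_right ⟨4 * (u + p), by rw [← huv]; ring⟩).symm

theorem exists_eq_mul_pow_of_coprime_of_mul_eq {m n u v w : ℕ} (hm : m ≠ 0) (hn : n ≠ 0)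
    (huv : u.Coprime v) (hmv : m.Coprime v) (h : u * v = m * w ^ n) :
    ∃ c d : ℕ, c.Coprime d ∧ c * d = w ∧ u = m * c ^ n ∧ v = d ^ n := by
  obtain ⟨t, rfl⟩ : m ∣ u := hmv.dvd_of_dvd_mul_right ⟨w ^ n, h⟩
  have htv : t.Coprime v := huv.coprime_mul_left
  have ht : t * v = w ^ n := mul_left_cancel₀ hm (by rw [← h, mul_assoc])
  obtain ⟨c, rfl⟩ := exists_eq_pow_of_mul_eq_pow (Nat.isUnit_iff.2 htv) ht
  obtain ⟨d, rfl⟩ := exists_eq_pow_of_mul_eq_pow (Nat.isUnit_iff.2 htv.symm)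
    ((mul_comm _ _).trans ht)
  refine ⟨c, d, ?_, Nat.pow_left_injective hn (by simpa only [mul_pow] using ht), rfl, rfl⟩
  rwa [Nat.coprime_pow_left_iff hn.bot_lt, Nat.coprime_pow_right_iff hn.bot_lt] at htv

theorem exists_eq_prime_pow_mul_pow_of_coprime_of_mul_eq {p j n u v w : ℕ} (hp : p.Prime)
    (hn : n ≠ 0) (huv : u.Coprime v) (h : u * v = p ^ j * w ^ n) :
    ∃ c d : ℕ, c.Coprime d ∧ c * d = w ∧
      (u = p ^ j * c ^ n ∧ v = d ^ n ∨ u = d ^ n ∧ v = p ^ j * c ^ n) := by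
  have hpj : p ^ j ≠ 0 := pow_ne_zero j hp.ne_zero
  rcases Nat.coprime_or_dvd_of_prime hp v with hpv | hpv
  · obtain ⟨c, d, hcd, hw, hu, hv⟩ :=
      exists_eq_mul_pow_of_coprime_of_mul_eq hpj hn huv (hpv.pow_left j) h
    exact ⟨c, d, hcd, hw, .inl ⟨hu, hv⟩⟩
  · have hpu : p.Coprime u := (huv.coprime_dvd_right hpv).symm
    obtain ⟨c, d, hcd, hw, hv, hu⟩ :=
      exists_eq_mul_pow_of_coprime_of_mul_eq hpj hn huv.symm (hpu.pow_left j)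
        ((mul_comm _ _).trans h)
    exact ⟨c, d, hcd, hw, .inr ⟨hu, hv⟩⟩

theorem odd_of_pow_four_add_two_mul_pow_four_eq_sq {x y z : ℕ} (hxy : x.Coprime y)
    (h : x ^ 4 + 2 * y ^ 4 = z ^ 2) : Odd x := by
  by_contra hx
  rw [Nat.not_odd_iff_even] at hx
  have hy : Odd y := Nat.coprime_two_left.1 (hxy.coprime_dvd_left hx.two_dvd)
  have hz : Even z := by
    rw [← Nat.even_pow' two_ne_zero, ← h]
    exact (hx.pow_of_ne_zero four_ne_zero).add (even_two_mul _)
  have hx4 : 4 ∣ x ^ 4 := (pow_dvd_pow_of_dvd hx.two_dvd 2).trans (pow_dvd_pow x (by decide))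
  have hz4 : 4 ∣ z ^ 2 := pow_dvd_pow_of_dvd hz.two_dvd 2
  have hy4 : Odd (y ^ 4) := hy.pow
  grind

theorem not_four_dvd_sq_add_sq_of_odd {x : ℕ} (hx : Odd x) (y : ℕ) : ¬4 ∣ x ^ 2 + y ^ 2 := by
  have hx4 : x % 4 = 1 ∨ x % 4 = 3 := Nat.odd_mod_four_iff.1 (Nat.odd_iff.1 hx)
  have hy4 : y % 4 < 4 := Nat.mod_lt y (by decide)
  rw [Nat.dvd_iff_mod_eq_zero, Nat.add_mod, Nat.pow_mod, Nat.pow_mod y]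
  rcases hx4 with hx4 | hx4 <;> rw [hx4] <;> interval_cases y % 4 <;> decide

theorem exists_sq_add_eight_mul_pow_four_eq_pow_four {x y z : ℕ} (hxy : x.Coprime y)
    (h : x ^ 4 + 2 * y ^ 4 = z ^ 2) : ∃ a b : ℕ, y = 2 * (a * b) ∧ x ^ 2 + 8 * a ^ 4 = b ^ 4 := by
  have hx : Odd x := odd_of_pow_four_add_two_mul_pow_four_eq_sq hxy h
  obtain ⟨u, v, huv, hv, -, hmul⟩ := exists_coprime_add_eq_and_mul_eq_of_sq_add_eq_sq
    (p := x ^ 2) (by rw [← h]; ring) (even_two_mul (y ^ 4))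
    (Nat.Coprime.pow_left 2 ((Nat.coprime_two_right.2 hx).mul_right (hxy.pow_right 4)))
  obtain ⟨Y, rfl⟩ : 2 ∣ y := Nat.prime_two.dvd_of_dvd_pow (n := 4) ⟨u * v, by linarith⟩
  obtain ⟨a, b, -, rfl, ⟨rfl, rfl⟩ | ⟨rfl, rfl⟩⟩ :=
    exists_eq_prime_pow_mul_pow_of_coprime_of_mul_eq (j := 3) (w := Y) Nat.prime_two four_ne_zero
      huv (by linarith)
  · exact ⟨a, b, rfl, by linarith⟩
  · exact absurd ⟨2 * a ^ 4, by linarith⟩ (not_four_dvd_sq_add_sq_of_odd hx (b ^ 2))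

theorem exists_pow_four_add_two_mul_pow_four_eq_sq {x a b : ℕ} (hx : x.Coprime (2 * a))
    (h : x ^ 2 + 8 * a ^ 4 = b ^ 4) :
    ∃ c d : ℕ, d.Coprime c ∧ a = c * d ∧ d ^ 4 + 2 * c ^ 4 = b ^ 2 := by
  obtain ⟨u, v, huv, -, hadd, hmul⟩ := exists_coprime_add_eq_and_mul_eq_of_sq_add_eq_sq
    (p := x) (n := 8 * a ^ 4) (q := b ^ 2) (by rw [h]; ring) (Even.mul_right (by decide) _)
    (Nat.Coprime.mul_right (hx.coprime_mul_right_right.pow_right 3)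
      (hx.coprime_mul_left_right.pow_right 4))
  obtain ⟨c, d, hcd, rfl, ⟨rfl, rfl⟩ | ⟨rfl, rfl⟩⟩ :=
    exists_eq_prime_pow_mul_pow_of_coprime_of_mul_eq (j := 1) (w := a) Nat.prime_two four_ne_zero
      huv (by linarith)
  all_goals exact ⟨c, d, hcd.symm, rfl, by linarith⟩

theorem pow_four_add_two_mul_pow_four_ne_sq {x y : ℕ} (z : ℕ) (hy : y ≠ 0) (hxy : x.Coprime y) :
    x ^ 4 + 2 * y ^ 4 ≠ z ^ 2 := by
  induction y using Nat.strong_induction_on generalizing x z with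
  | _ y ih =>
    intro h
    obtain ⟨a, b, rfl, hb⟩ := exists_sq_add_eight_mul_pow_four_eq_pow_four hxy h
    have hxa : x.Coprime (2 * a) := hxy.coprime_dvd_right ⟨b, by ring⟩
    obtain ⟨c, d, hdc, rfl, hd⟩ := exists_pow_four_add_two_mul_pow_four_eq_sq hxa hb
    simp only [mul_ne_zero_iff] at hy
    obtain ⟨-, ⟨hc0, hd0⟩, hb0⟩ := hy
    have hlt : c < 2 * (c * d * b) := by
      have : 0 < d * b := by positivity
      nlinarith [hc0.bot_lt]
    exact ih c hlt b hc0 hdc hd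

theorem not_isSquare_pow_four_add_two (c : ℚ) : ¬IsSquare (c ^ 4 + 2) := by
  intro h
  have hcast : ((c.num.natAbs ^ 4 + 2 * c.den ^ 4 : ℕ) : ℚ) = (c ^ 4 + 2) * c.den ^ 4 := by
    have habs : (c.num.natAbs : ℚ) ^ 4 = (c.num : ℚ) ^ 4 := by
      rw [Nat.cast_natAbs, Int.cast_abs, Even.pow_abs (by decide)]
    push_cast
    rw [habs, ← Rat.mul_den_eq_num c]
    ring
  have hsq : IsSquare (c.num.natAbs ^ 4 + 2 * c.den ^ 4) := by
    rw [← Rat.isSquare_natCast_iff, hcast]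
    exact h.mul (Even.isSquare_pow (by decide) _)
  obtain ⟨z, hz⟩ := (isSquare_iff_exists_sq _).1 hsq
  exact pow_four_add_two_mul_pow_four_ne_sq z c.den_nz c.reduced hz

end Descent

theorem x4_add_two_superirreducible :
    IsSuperirreducible ℚ 2 (X ^ 4 + 2) := by
  have hdeg : (X ^ 4 + 2 : ℚ[X]).natDegree = 4 := by compute_degree!
  have hmonic : (X ^ 4 + 2 : ℚ[X]).Monic := by monicity!
  have hirr : Irreducible (X ^ 4 + 2 : ℚ[X]) :=
    irreducible_X_pow_four_add_C (t := 2) (by norm_num) (by norm_num)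
  refine isSuperirreducible_two_of_forall_not_isSquare hirr
    (by rw [hdeg]; decide) fun c ↦ ?_
  rw [hmonic.leadingCoeff, one_mul]
  simpa using not_isSquare_pow_four_add_two c
end
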